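/- Let p > 3 be a prime number, let K be a field of characteristic zero, and let A be an associative unital K-algebra which is a division ring with center equal to K and of dimension 9 over K. Then the group Aˣ/Kˣ contains no subgroup isomorphic to μ_3 × μ_3 × μ_p; that is, there is no injective group homomorphism from (ℤ/3ℤ) × (ℤ/3ℤ) × (ℤ/pℤ) into Aˣ/Kˣ. -/

import Mathlib

/-- The central subgroup `Kˣ ⊆ Aˣ`: the units of `A` lying in the image of the structure map
`K → A`. -/
def centralUnits (K A : Type*) [Field K] [DivisionRing A] [Algebra K A] : Subgroup Aˣ :=
  (Units.map (algebraMap K A).toMonoidHom).range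

instance centralUnits_normal (K A : Type*) [Field K] [DivisionRing A] [Algebra K A] :
    (centralUnits K A).Normal := by
  constructor
  intro x hx g
  obtain ⟨k, hk⟩ := hx
  have hx' : (x : A) = algebraMap K A (k : K) := by rw [← hk]; rfl
  have h1 : g * x = x * g := by
    apply Units.ext
    rw [Units.val_mul, Units.val_mul, hx']
    exact (Algebra.commutes (k : K) (g : A)).symm
  have h2 : g * x * g⁻¹ = x := by rw [h1, mul_inv_cancel_right]
  rw [h2]
  exact ⟨k, hk⟩

/-- If `x` and `g` commute up to an element `c` commuting with both, and two powers of coprime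
exponents commute with the other element, then `x` and `g` commute. -/
theorem Commute.of_pow_of_coprime {G : Type*} [Group G] {x g c : G} {m n : ℕ}
    (h : SemiconjBy x g (c * g)) (hcx : Commute c x) (hcg : Commute c g)
    (hm : Commute (x ^ m) g) (hn : Commute x (g ^ n)) (hmn : m.Coprime n) : Commute x g := by
  have hcn : c ^ n = 1 := by
    have h1 := (h.pow_right n).eq
    rw [hn.eq, hcg.mul_pow, mul_assoc, right_eq_mul] at h1
    exact h1
  have h' : SemiconjBy g x (c⁻¹ * x) := by
    rw [SemiconjBy, mul_assoc, h.eq, mul_assoc, inv_mul_cancel_left]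
  have hcm : c ^ m = 1 := by
    have h1 := (h'.pow_right m).eq
    rw [← hm.eq, hcx.inv_left.mul_pow, mul_assoc, right_eq_mul, inv_pow, inv_eq_one] at h1
    exact h1
  have hc : c = 1 := by simpa [hmn.gcd_eq_one] using pow_gcd_eq_one.2 ⟨hcm, hcn⟩
  rwa [hc, one_mul] at h

theorem Subalgebra.finrank_dvd_of_divisionRing {K A : Type*} [Field K] [DivisionRing A]
    [Algebra K A] [FiniteDimensional K A] (S : Subalgebra K A) :
    Module.finrank K S ∣ Module.finrank K A := by
  let _ : DivisionRing S := divisionRingOfFiniteDimensional K S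
  exact Dvd.intro _ (Module.finrank_mul_finrank K S A)

section PrimeExtension

variable {K L : Type*} [Field K] [Field L] [Algebra K L]

/-- In an extension of degree coprime to `p`, an element of `K` which is a `p`-th power in `L` is
already a `p`-th power in `K`. -/
theorem exists_pow_eq_of_pow_eq_algebraMap [FiniteDimensional K L] {p : ℕ}
    (hp : (Module.finrank K L).Coprime p) {g : L} (hg : g ≠ 0) {a : K}
    (h : g ^ p = algebraMap K L a) : ∃ b : K, b ≠ 0 ∧ b ^ p = a := by
  have ha : a ≠ 0 := by
    rintro rfl
    rw [map_zero] at h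
    exact hg (eq_zero_of_pow_eq_zero h)
  have hN : Algebra.norm K g ≠ 0 := Algebra.norm_ne_zero_iff.2 hg
  have hNp : Algebra.norm K g ^ p = a ^ Module.finrank K L := by
    rw [← map_pow, h, Algebra.norm_algebraMap]
  obtain ⟨u, v, huv⟩ := Nat.isCoprime_iff_coprime.2 hp
  refine ⟨Algebra.norm K g ^ u * a ^ v, mul_ne_zero (zpow_ne_zero _ hN) (zpow_ne_zero _ ha), ?_⟩
  calc (Algebra.norm K g ^ u * a ^ v) ^ p
      = (Algebra.norm K g ^ p) ^ u * (a ^ v) ^ p := by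
        rw [mul_pow, ← zpow_natCast, ← zpow_mul, mul_comm u, zpow_mul, zpow_natCast]
    _ = a ^ (u * Module.finrank K L + v * p) := by
        rw [hNp, zpow_add₀ ha, ← zpow_natCast a, ← zpow_mul, ← zpow_natCast (a ^ v), ← zpow_mul,
          mul_comm u]
    _ = a := by rw [huv, zpow_one]

/-- An extension of prime degree generated by a primitive root of unity admits an
automorphism fixing only the elements of the base field. -/
theorem exists_algEquiv_mem_bot_of_fixed (hL : (Module.finrank K L).Prime) {n : ℕ}
    [NeZero n] {z : L} (hz : IsPrimitiveRoot z n) (hzK : z ∉ (⊥ : IntermediateField K L)) :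
    ∃ s : L ≃ₐ[K] L, ∀ y, s y = y → y ∈ (⊥ : IntermediateField K L) := by
  have : FiniteDimensional K L := Module.finite_of_finrank_pos hL.pos
  have : IsSimpleOrder (IntermediateField K L) :=
    IntermediateField.isSimpleOrder_of_finrank_prime K L hL
  have htop : IntermediateField.adjoin K {z} = ⊤ :=
    (eq_bot_or_eq_top _).resolve_left fun h =>
      hzK (IntermediateField.adjoin_simple_eq_bot_iff.1 h)
  have hcyc := hz.intermediateField_adjoin_isCyclotomicExtension K
  have : IsGalois K (IntermediateField.adjoin K {z}) := IsCyclotomicExtension.isGalois {n} K _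
  rw [htop] at this
  have : IsGalois K L := IsGalois.of_algEquiv IntermediateField.topEquiv
  by_contra! H
  have hz' := (IsGalois.mem_bot_iff_fixed (F := K) z).not.1 hzK
  push Not at hz'
  obtain ⟨s, hs⟩ := hz'
  obtain ⟨y, hy, hyK⟩ := H s
  have hy' : IntermediateField.adjoin K {y} = ⊤ :=
    (eq_bot_or_eq_top _).resolve_left fun h =>
      hyK (IntermediateField.adjoin_simple_eq_bot_iff.1 h)
  have hle : IntermediateField.adjoin K {y} ≤
      IntermediateField.fixedField (Subgroup.zpowers s) := by
    rw [IntermediateField.adjoin_simple_le_iff, IntermediateField.mem_fixedField_iff]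
    intro t ht
    obtain ⟨k, rfl⟩ := Subgroup.mem_zpowers_iff.1 ht
    exact MulAction.mem_stabilizer_iff.1
      ((MulAction.stabilizer (L ≃ₐ[K] L) y).zpow_mem (MulAction.mem_stabilizer_iff.2 hy) k)
  rw [hy'] at hle
  exact hs ((IntermediateField.mem_fixedField_iff _ _).1 (hle (IntermediateField.mem_top (x := z))) s
    (Subgroup.mem_zpowers s))

theorem exists_ne_div_mem_bot_of_fixed_mem_bot {s : L ≃ₐ[K] L}
    (hs : ∀ y, s y = y → y ∈ (⊥ : IntermediateField K L)) {n : ℕ} (hn : 0 < n)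
    {ι : Type*} [Fintype ι] (hι : n < Fintype.card ι) (x : ι → L) (hx0 : ∀ i, x i ≠ 0)
    (hx : ∀ i, x i ^ n ∈ (⊥ : IntermediateField K L)) :
    ∃ i j, i ≠ j ∧ x i / x j ∈ (⊥ : IntermediateField K L) := by
  classical
  have hmaps : ∀ i ∈ Finset.univ, s (x i) / x i ∈ Polynomial.nthRootsFinset n (1 : L) := by
    intro i _
    obtain ⟨a, ha⟩ := IntermediateField.mem_bot.1 (hx i)
    rw [Polynomial.mem_nthRootsFinset hn, div_pow, ← map_pow, ← ha, s.commutes, div_self]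
    rw [ha]
    exact pow_ne_zero _ (hx0 i)
  have hcard : (Polynomial.nthRootsFinset n (1 : L)).card < (Finset.univ : Finset ι).card := by
    refine lt_of_le_of_lt ?_ (Finset.card_univ (α := ι) ▸ hι)
    rw [Polynomial.nthRootsFinset_def]
    exact (Multiset.toFinset_card_le _).trans (Polynomial.card_nthRoots n 1)
  obtain ⟨i, -, j, -, hij, h⟩ := Finset.exists_ne_map_eq_of_card_lt_of_maps_to hcard hmaps
  refine ⟨i, j, hij, hs _ ?_⟩
  rw [div_eq_div_iff (hx0 i) (hx0 j)] at h
  rw [map_div₀, div_eq_div_iff (by simpa using hx0 j) (hx0 j), h, mul_comm]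

/-- An extension of prime degree `q` which contains, outside of `K`, a `p`-th root of an element
of `K` with `p ≠ q` prime has at most `q` classes in `Lˣ / Kˣ` killed by `q`. -/
theorem exists_ne_div_mem_bot_of_pow_mem_bot {p q : ℕ} (hp : p.Prime) (hq : q.Prime)
    (hpq : p ≠ q) (hL : Module.finrank K L = q) {g : L} (hg : g ∉ (⊥ : Subalgebra K L))
    (hgp : g ^ p ∈ (⊥ : Subalgebra K L)) {ι : Type*} [Fintype ι] (hι : q < Fintype.card ι)
    (x : ι → L) (hx0 : ∀ i, x i ≠ 0) (hx : ∀ i, x i ^ q ∈ (⊥ : Subalgebra K L)) :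
    ∃ i j, i ≠ j ∧ x i / x j ∈ (⊥ : Subalgebra K L) := by
  have : FiniteDimensional K L := Module.finite_of_finrank_pos (hL ▸ hq.pos)
  obtain ⟨a, ha⟩ := Algebra.mem_bot.1 hgp
  have hg0 : g ≠ 0 := fun h => hg (h ▸ zero_mem _)
  obtain ⟨b, hb, rfl⟩ := exists_pow_eq_of_pow_eq_algebraMap
    (hL ▸ (Nat.coprime_primes hq hp).2 hpq.symm) hg0 ha.symm
  have hb' : algebraMap K L b ≠ 0 := by simpa using hb
  have hzK : g / algebraMap K L b ∉ (⊥ : Subalgebra K L) := fun h => hg <| by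
    simpa [hb'] using mul_mem h (Subalgebra.algebraMap_mem ⊥ b)
  have hz : IsPrimitiveRoot (g / algebraMap K L b) p := by
    have : Fact p.Prime := ⟨hp⟩
    refine IsPrimitiveRoot.iff_orderOf.2 (orderOf_eq_prime ?_ fun h => hzK (h ▸ one_mem _))
    rw [div_pow, ← ha, map_pow, div_self (pow_ne_zero _ hb')]
  have : NeZero p := ⟨hp.ne_zero⟩
  obtain ⟨s, hs⟩ := exists_algEquiv_mem_bot_of_fixed (hL.symm ▸ hq) hz hzK
  exact exists_ne_div_mem_bot_of_fixed_mem_bot hs hq.pos hι x hx0 hx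

end PrimeExtension

section PrimeDegree

variable {K A : Type*} [Field K] [DivisionRing A] [Algebra K A]

/-- In a central division algebra of prime degree, every non-central element generates a maximal
subfield, of dimension the degree. -/
theorem finrank_adjoin_singleton_of_finrank_eq_sq {q : ℕ} (hq : q.Prime)
    (hcenter : Subalgebra.center K A = ⊥) (hrank : Module.finrank K A = q ^ 2) {g : A}
    (hg : g ∉ (⊥ : Subalgebra K A)) :
    Module.finrank K (Algebra.adjoin K {g}) = q ∧
      Subalgebra.centralizer K {g} = Algebra.adjoin K {g} := by
  have : FiniteDimensional K A :=
    Module.finite_of_finrank_pos (hrank ▸ pow_pos hq.pos 2)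
  have hdvd (S : Subalgebra K A) :
      S = ⊥ ∨ Module.finrank K S = q ∨ S = ⊤ := by
    obtain ⟨k, hk, hS⟩ := (Nat.dvd_prime_pow hq).1 (hrank ▸ S.finrank_dvd_of_divisionRing)
    interval_cases k
    · exact .inl (Subalgebra.finrank_eq_one_iff.1 (by simpa using hS))
    · exact .inr (.inl (by simpa using hS))
    · refine .inr (.inr ?_)
      rw [← Algebra.toSubmodule_eq_top]
      exact Submodule.eq_top_of_finrank_eq (hS.trans hrank.symm)
  have hle : Algebra.adjoin K {g} ≤ Subalgebra.centralizer K {g} := by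
    refine Algebra.adjoin_le ?_
    rw [Set.singleton_subset_iff]
    exact Subalgebra.mem_centralizer_iff K |>.2 (by simp)
  have hgmem : g ∈ Algebra.adjoin K {g} := Algebra.self_mem_adjoin_singleton K g
  have hCtop : Subalgebra.centralizer K {g} ≠ ⊤ := by
    refine fun h => hg ?_
    rw [← hcenter, Subalgebra.mem_center_iff]
    intro b
    have hb : b ∈ Subalgebra.centralizer K {g} := h ▸ Algebra.mem_top
    exact ((Subalgebra.mem_centralizer_iff K).1 hb g rfl).symm
  have hC : Module.finrank K (Subalgebra.centralizer K {g}) = q :=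
    ((hdvd _).resolve_left fun h => hg (h ▸ hle hgmem)).resolve_right hCtop
  have hB : Module.finrank K (Algebra.adjoin K {g}) = q :=
    ((hdvd _).resolve_left fun h => hg (h ▸ hgmem)).resolve_right
      fun h => hCtop (top_le_iff.1 (h ▸ hle))
  refine ⟨hB, (Subalgebra.eq_of_le_of_finrank_eq hle (hB.trans hC.symm)).symm⟩

theorem exists_ne_div_mem_bot_of_commute {p q : ℕ} (hp : p.Prime) (hq : q.Prime) (hpq : p ≠ q)
    (hcenter : Subalgebra.center K A = ⊥) (hrank : Module.finrank K A = q ^ 2) {g : A}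
    (hg : g ∉ (⊥ : Subalgebra K A)) (hgp : g ^ p ∈ (⊥ : Subalgebra K A))
    {ι : Type*} [Fintype ι] (hι : q < Fintype.card ι) (x : ι → A) (hx0 : ∀ i, x i ≠ 0)
    (hx : ∀ i, x i ^ q ∈ (⊥ : Subalgebra K A)) (hxg : ∀ i, Commute (x i) g) :
    ∃ i j, i ≠ j ∧ x i / x j ∈ (⊥ : Subalgebra K A) := by
  have : FiniteDimensional K A := Module.finite_of_finrank_pos (hrank ▸ pow_pos hq.pos 2)
  obtain ⟨hdim, hcent⟩ := finrank_adjoin_singleton_of_finrank_eq_sq hq hcenter hrank hg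
  set L := Algebra.adjoin K {g}
  have hmem (i) : x i ∈ L := hcent ▸ (Subalgebra.mem_centralizer_iff K).2
    fun a ha => (Set.mem_singleton_iff.1 ha ▸ hxg i).eq.symm
  have : IsMulCommutative L := Algebra.isMulCommutative_adjoin K (by simp)
  let _ : Field L := fieldOfFiniteDimensional K L
  have hbot (y : L) : y ∈ (⊥ : Subalgebra K L) ↔ (y : A) ∈ (⊥ : Subalgebra K A) := by
    simp only [Algebra.mem_bot, Set.mem_range, Subtype.ext_iff]
    rfl
  obtain ⟨i, j, hij, h⟩ := exists_ne_div_mem_bot_of_pow_mem_bot (K := K) (L := L) hp hq hpq hdim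
    (g := ⟨g, Algebra.self_mem_adjoin_singleton K g⟩) ((hbot _).not.2 hg) ((hbot _).2 hgp) hι
    (fun i => ⟨x i, hmem i⟩) (fun i h => hx0 i (congrArg Subtype.val h)) (fun i => (hbot _).2 (hx i))
  refine ⟨i, j, hij, ?_⟩
  have hxj : (⟨x j, hmem j⟩ : L) ≠ 0 := fun h => hx0 j (congrArg Subtype.val h)
  have hval := congrArg Subtype.val (div_mul_cancel₀ (⟨x i, hmem i⟩ : L) hxj)
  rw [(div_eq_iff (hx0 j)).2 hval.symm]
  exact (hbot _).1 h

end PrimeDegree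

theorem mem_centralUnits_iff {K A : Type*} [Field K] [DivisionRing A] [Algebra K A] {u : Aˣ} :
    u ∈ centralUnits K A ↔ (u : A) ∈ (⊥ : Subalgebra K A) := by
  rw [Algebra.mem_bot]
  constructor
  · rintro ⟨k, rfl⟩
    exact ⟨k, rfl⟩
  · rintro ⟨k, hk⟩
    have hk0 : k ≠ 0 := by
      rintro rfl
      exact u.ne_zero (by rw [← hk, map_zero])
    exact ⟨Units.mk0 k hk0, Units.ext hk⟩

theorem commute_of_mem_centralUnits {K A : Type*} [Field K] [DivisionRing A] [Algebra K A]
    {u : Aˣ} (hu : u ∈ centralUnits K A) (v : Aˣ) : Commute u v := by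
  obtain ⟨k, rfl⟩ := hu
  exact Units.ext (Algebra.commutes (k : K) (v : A))

/-- Lifts to `Aˣ` of commuting elements of `Aˣ / Kˣ` of coprime orders commute. -/
theorem commute_of_commute_mk {K A : Type*} [Field K] [DivisionRing A] [Algebra K A]
    {x g : Aˣ} {m n : ℕ} (h : Commute (x : Aˣ ⧸ centralUnits K A) g)
    (hx : x ^ m ∈ centralUnits K A) (hg : g ^ n ∈ centralUnits K A) (hmn : m.Coprime n) :
    Commute x g := by
  have hc : x * g * x⁻¹ * g⁻¹ ∈ centralUnits K A := by
    rw [← QuotientGroup.eq_one_iff]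
    simp only [QuotientGroup.mk_mul, QuotientGroup.mk_inv]
    rw [h.eq, mul_inv_cancel_right, mul_inv_cancel]
  refine Commute.of_pow_of_coprime (c := x * g * x⁻¹ * g⁻¹) ?_ (commute_of_mem_centralUnits hc x)
    (commute_of_mem_centralUnits hc g) (commute_of_mem_centralUnits hx g)
    (commute_of_mem_centralUnits hg x).symm hmn
  rw [SemiconjBy]
  group

/-- Let `p > 3` be a prime, `K` a field of characteristic zero, and `A` a central division
algebra of dimension `9` over `K`. Then the group `Aˣ/Kˣ` (the automorphism group of the
non-trivial Severi–Brauer surface corresponding to `A`) contains no subgroup isomorphic to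
`μ₃ × μ₃ × μ_p`: there is no injective group homomorphism
`(ℤ/3ℤ) × (ℤ/3ℤ) × (ℤ/pℤ) → Aˣ/Kˣ`. -/
theorem stmt_16 (p : ℕ) (hp : p.Prime) (hp3 : 3 < p)
    (K : Type) [Field K] [CharZero K]
    (A : Type) [DivisionRing A] [Algebra K A]
    (hcenter : Subalgebra.center K A = ⊥) (hrank : Module.finrank K A = 9) :
    ∀ f : Multiplicative (ZMod 3 × ZMod 3 × ZMod p) →* (Aˣ ⧸ centralUnits K A),
      ¬ Function.Injective f := by
  intro f hf
  have lift (y : Aˣ ⧸ centralUnits K A) : ∃ u : Aˣ, (u : Aˣ ⧸ centralUnits K A) = y :=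
    QuotientGroup.mk_surjective y
  obtain ⟨g, hg⟩ := lift (f (.ofAdd (0, 0, 1)))
  choose x hx using fun i : ZMod 3 × ZMod 3 => lift (f (.ofAdd (i.1, i.2, 0)))
  have hgp : g ^ p ∈ centralUnits K A := by
    rw [← QuotientGroup.eq_one_iff, QuotientGroup.mk_pow, hg, ← map_pow, ← ofAdd_nsmul,
      map_eq_one_iff f hf, ofAdd_eq_one]
    simp
  have hx3 (i) : x i ^ 3 ∈ centralUnits K A := by
    rw [← QuotientGroup.eq_one_iff, QuotientGroup.mk_pow, hx, ← map_pow, ← ofAdd_nsmul,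
      map_eq_one_iff f hf, ofAdd_eq_one]
    have h3 (a : ZMod 3) : 3 • a = 0 := by simpa using ZModModule.char_nsmul_eq_zero 3 a
    simp [h3]
  have hg1 : g ∉ centralUnits K A := by
    have : Fact (1 < p) := ⟨hp.one_lt⟩
    rw [← QuotientGroup.eq_one_iff, hg, map_eq_one_iff f hf, ofAdd_eq_one]
    simp
  have hxg (i) : Commute (x i) g := by
    refine commute_of_commute_mk ?_ (hx3 i) hgp
      ((Nat.coprime_primes Nat.prime_three hp).2 hp3.ne)
    rw [hx, hg]
    exact (Commute.all _ _).map f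
  obtain ⟨i, j, hij, h⟩ := exists_ne_div_mem_bot_of_commute hp Nat.prime_three hp3.ne' hcenter
    (hrank.trans (by norm_num)) (mem_centralUnits_iff.not.1 hg1)
    (by simpa using mem_centralUnits_iff.1 hgp) (ι := ZMod 3 × ZMod 3) (by simp)
    (fun i => (x i : A)) (fun i => (x i).ne_zero)
    (fun i => by simpa using mem_centralUnits_iff.1 (hx3 i))
    (fun i => congrArg Units.val (hxg i).eq)
  rw [← Units.val_div_eq_div_val, ← mem_centralUnits_iff, ← QuotientGroup.eq_one_iff,
    QuotientGroup.mk_div, hx, hx, div_eq_one, hf.eq_iff, Multiplicative.ofAdd.injective.eq_iff] at h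
  exact hij (by simpa [Prod.ext_iff] using h)
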